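/- Let Ω ⊆ ℝ³ be open, α > −1, and fix η ∈ C_0^∞(B_{5/3}) with η = 1 on B_{4/3}; set η_ρ(x) = η(x/ρ). There exists a constant c > 0, depending only on α and η, with the following property: if ρ > 0 and u ∈ H̊¹(Ω;ℝ³) satisfies Lu = 0 on Ω∩B_{2ρ}, then for every y ∈ B_ρ, ∫_Ω [L(u η_ρ)(x)] · (Φ(x−y) u(x) η_ρ(x)) dx ≤ c · m_ρ(u). -/

import Mathlib

/-!
Put `S_ρ = {ρ < |x| < 2ρ}`. Since `Lu = 0` on `Ω ∩ B_{2ρ}`, the field `L(u η_ρ)` is the commutator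
of `L` with `η_ρ`, which contains only `u`, `Du` and derivatives of `η_ρ` (`lame_mul`). The integrand
therefore vanishes on `B_{4ρ/3}`, and also outside `B_{5ρ/3}` because of the factor `η_ρ`. In
between, `|x - y| ≥ ρ/3`, so `Φ(x - y) = O(ρ⁻¹)` and the integrand is bounded by
`C ρ⁻³ (|u|² + ρ²|Du|²)` (`abs_integrand_le`). This bound is integrable on `Ω`, hence no
integrability of the integrand itself is needed.

It remains to bound `∫ |Du|²` over `4ρ/3 ≤ |x| ≤ 5ρ/3` by `C ρ⁻² ∫_{Ω ∩ S_ρ} |u|²`, which is a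
Caccioppoli inequality (`caccioppoli`). The operator is written as `-Lu = div σ(u)` with the stress
`σᵢⱼ = ∂ⱼuᵢ + s ∂ᵢuⱼ + (α - s) δᵢⱼ div u`, where `s` is free. The choice `s = ε - 1` with
`ε = min 1 (1 + α)` makes `σ(u) : Du ≥ ε|Du|²` pointwise for every `α > -1` (`stress_coercive`), so
that testing the weak form with `ζ² u` gives the inequality directly. That `ζ² u` is admissible
follows by approximating `u` in `H¹` with test fields (`flux_self_integral_eq_zero`).
-/

open MeasureTheory Metric Real Filter

noncomputable section

/-- `ℝ³` as Euclidean space. -/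
abbrev E3 : Type := EuclideanSpace ℝ (Fin 3)

/-- Partial derivative `∂ᵢ f` on `ℝ³`. -/
def pd (i : Fin 3) (f : E3 → ℝ) (x : E3) : ℝ :=
  fderiv ℝ f x (EuclideanSpace.single i 1)

/-- Laplacian on `ℝ³`. -/
def lap (f : E3 → ℝ) (x : E3) : ℝ := ∑ i, pd i (pd i f) x

/-- Divergence of a vector field on `ℝ³`. -/
def divg (u : E3 → Fin 3 → ℝ) (x : E3) : ℝ := ∑ k, pd k (fun y => u y k) x

/-- The 3D Lamé operator `(Lu)ᵢ = -Δuᵢ - α ∂ᵢ (div u)`. -/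
def lame (α : ℝ) (u : E3 → Fin 3 → ℝ) (x : E3) (i : Fin 3) : ℝ :=
  - lap (fun y => u y i) x - α * pd i (divg u) x

/-- The constant `c_α = (α+2)/(8π(α+1))`. -/
def cA (α : ℝ) : ℝ := (α + 2) / (8 * Real.pi * (α + 1))

/-- The fundamental matrix `Φ` of the 3D Lamé system:
`Φ_ij(x) = c_α |x|⁻¹ (δ_ij + (α/(α+2)) xᵢxⱼ/|x|²)`. -/
def Phi (α : ℝ) (x : E3) (i j : Fin 3) : ℝ :=
  cA α * ‖x‖⁻¹ * ((if i = j then (1 : ℝ) else 0) + (α / (α + 2)) * (x i * x j) / ‖x‖ ^ 2)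

/-- `u ∈ C₀^∞(U; ℝ³)`: smooth, compactly supported, with support inside `U`. -/
def IsTestOn (U : Set E3) (u : E3 → Fin 3 → ℝ) : Prop :=
  ContDiff ℝ (⊤ : ℕ∞) u ∧ HasCompactSupport u ∧ tsupport u ⊆ U

/-- `∫_{ℝ³} (Lu)·(Φ(·-y) u) dx`. -/
def lameEnergy (α : ℝ) (u : E3 → Fin 3 → ℝ) (y : E3) : ℝ :=
  ∫ x : E3, ∑ i, ∑ j, lame α u x i * Phi α (x - y) i j * u x j

/-- `u ∈ H̊¹(Ω; ℝ³)`: `u` is smooth on `Ω`, `∫_Ω (|u|² + |Du|²) < ∞`, and `u` is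
approximated in this norm by test fields supported in `Ω`. -/
def MemH10 (Ω : Set E3) (u : E3 → Fin 3 → ℝ) : Prop :=
  ContDiffOn ℝ (⊤ : ℕ∞) u Ω ∧
  IntegrableOn (fun x => (∑ i, (u x i) ^ 2) +
    ∑ i, ∑ k, (pd k (fun z => u z i) x) ^ 2) Ω volume ∧
  ∃ un : ℕ → E3 → Fin 3 → ℝ, (∀ n, IsTestOn Ω (un n)) ∧
    Tendsto (fun n => ∫ x in Ω, ((∑ i, (u x i - un n x i) ^ 2) +
      ∑ i, ∑ k, (pd k (fun z => u z i - un n z i) x) ^ 2)) atTop (nhds 0)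

/-- `m_ρ(u) = ρ⁻³ ∫_{Ω ∩ S_ρ} |u|² dx`, where `S_ρ = {ρ < |x| < 2ρ}`. -/
def mRho (Ω : Set E3) (ρ : ℝ) (u : E3 → Fin 3 → ℝ) : ℝ :=
  (ρ ^ 3)⁻¹ * ∫ x in Ω ∩ {x : E3 | ρ < ‖x‖ ∧ ‖x‖ < 2 * ρ}, ∑ i, (u x i) ^ 2

/-- `M_ρ(u) = ρ⁻³ ∫_{Ω ∩ B_ρ} |u|² dx`. -/
def MRho (Ω : Set E3) (ρ : ℝ) (u : E3 → Fin 3 → ℝ) : ℝ :=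
  (ρ ^ 3)⁻¹ * ∫ x in Ω ∩ ball (0 : E3) ρ, ∑ i, (u x i) ^ 2

/-! ### Partial derivatives -/

lemma pd_congr {f g : E3 → ℝ} {x : E3} (h : f =ᶠ[nhds x] g) (i : Fin 3) : pd i f x = pd i g x := by
  unfold pd; rw [h.fderiv_eq]

lemma pd_add {f g : E3 → ℝ} {x : E3} (hf : DifferentiableAt ℝ f x) (hg : DifferentiableAt ℝ g x)
    (i : Fin 3) : pd i (fun z => f z + g z) x = pd i f x + pd i g x := by
  unfold pd; rw [fderiv_fun_add hf hg]; rfl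

lemma pd_sub {f g : E3 → ℝ} {x : E3} (hf : DifferentiableAt ℝ f x) (hg : DifferentiableAt ℝ g x)
    (i : Fin 3) : pd i (fun z => f z - g z) x = pd i f x - pd i g x := by
  unfold pd; rw [fderiv_fun_sub hf hg]; rfl

lemma pd_mul {f g : E3 → ℝ} {x : E3} (hf : DifferentiableAt ℝ f x) (hg : DifferentiableAt ℝ g x)
    (i : Fin 3) : pd i (fun z => f z * g z) x = f x * pd i g x + g x * pd i f x := by
  unfold pd; rw [fderiv_fun_mul hf hg]; rfl

lemma pd_const_mul {f : E3 → ℝ} {x : E3} (hf : DifferentiableAt ℝ f x) (c : ℝ)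
    (i : Fin 3) : pd i (fun z => c * f z) x = c * pd i f x := by
  unfold pd; rw [fderiv_const_mul hf]; rfl

lemma pd_sum {ι : Type*} (s : Finset ι) {f : ι → E3 → ℝ} {x : E3}
    (hf : ∀ k ∈ s, DifferentiableAt ℝ (f k) x) (i : Fin 3) :
    pd i (fun z => ∑ k ∈ s, f k z) x = ∑ k ∈ s, pd i (f k) x := by
  unfold pd; rw [fderiv_fun_sum hf]; simp

lemma pd_zero (i : Fin 3) (x : E3) : pd i (fun _ => (0 : ℝ)) x = 0 := by
  simp [pd]

/-- Chain rule for dilations; no differentiability is needed. -/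
lemma pd_scale (f : E3 → ℝ) (a : ℝ) (i : Fin 3) (x : E3) :
    pd i (fun z => f (a • z)) x = a * pd i f (a • x) := by
  unfold pd; rw [fderiv_comp_smul]; simp

lemma contDiffOn_pd {Ω : Set E3} (hΩ : IsOpen Ω) {f : E3 → ℝ}
    (hf : ContDiffOn ℝ (⊤ : ℕ∞) f Ω) (i : Fin 3) : ContDiffOn ℝ (⊤ : ℕ∞) (pd i f) Ω := by
  have h := hf.fderiv_of_isOpen (m := (⊤ : ℕ∞)) hΩ (by norm_cast)
  exact h.clm_apply contDiffOn_const

lemma contDiff_pd {f : E3 → ℝ}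
    (hf : ContDiff ℝ (⊤ : ℕ∞) f) (i : Fin 3) : ContDiff ℝ (⊤ : ℕ∞) (pd i f) := by
  rw [← contDiffOn_univ] at *
  exact contDiffOn_pd isOpen_univ hf i

lemma ContDiffOn.dAt {Ω : Set E3} (hΩ : IsOpen Ω) {f : E3 → ℝ}
    (hf : ContDiffOn ℝ (⊤ : ℕ∞) f Ω) {x : E3} (hx : x ∈ Ω) : DifferentiableAt ℝ f x :=
  (hf.differentiableOn (by simp)).differentiableAt (hΩ.mem_nhds hx)

lemma pd_comm {Ω : Set E3} (hΩ : IsOpen Ω) {f : E3 → ℝ}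
    (hf : ContDiffOn ℝ (⊤ : ℕ∞) f Ω) {x : E3} (hx : x ∈ Ω) (i j : Fin 3) :
    pd i (pd j f) x = pd j (pd i f) x := by
  have h2 : ContDiffAt ℝ (⊤ : ℕ∞) f x := hf.contDiffAt (hΩ.mem_nhds hx)
  have hs : IsSymmSndFDerivAt ℝ f x := h2.isSymmSndFDerivAt (by
    rw [minSmoothness_of_isRCLikeNormedField]; exact WithTop.coe_le_coe.2 (le_top : (2 : ℕ∞) ≤ ⊤))
  have hd : DifferentiableAt ℝ (fderiv ℝ f) x := by
    have h := hf.fderiv_of_isOpen (m := (⊤ : ℕ∞)) hΩ (by norm_cast)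
    exact (h.differentiableOn (by simp)).differentiableAt (hΩ.mem_nhds hx)
  have key : ∀ a b : Fin 3, pd a (pd b f) x =
      fderiv ℝ (fderiv ℝ f) x (EuclideanSpace.single a 1) (EuclideanSpace.single b 1) := by
    intro a b
    show fderiv ℝ (fun y => fderiv ℝ f y (EuclideanSpace.single b 1)) x _ = _
    rw [fderiv_clm_apply hd (differentiableAt_const _)]
    simp
  rw [key, key]
  exact hs _ _

lemma integral_pd_eq_zero {f : E3 → ℝ} (hf : ContDiff ℝ 1 f) (hc : HasCompactSupport f)
    (i : Fin 3) : ∫ x, pd i f x = 0 := by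
  have hcont : Continuous (fun x => fderiv ℝ f x (EuclideanSpace.single i 1)) :=
    (hf.continuous_fderiv (by simp)).clm_apply continuous_const
  have hi : Integrable (fun x => fderiv ℝ f x (EuclideanSpace.single i 1)) :=
    hcont.integrable_of_hasCompactSupport (hc.fderiv_apply ℝ _)
  have := integral_mul_fderiv_eq_neg_fderiv_mul_of_integrable (μ := (volume : Measure E3))
    (f := fun _ : E3 => (1 : ℝ)) (g := f) (v := EuclideanSpace.single i 1)
    (by simp) (by simpa using hi)
    (by simpa using hf.continuous.integrable_of_hasCompactSupport hc)
    (by fun_prop) (fun x _ => hf.differentiable (by simp) x)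
  simpa [pd] using this

/-! ### The stress tensor and the weak form of the Lamé system -/

/-- The stress `σᵢⱼ(u) = ∂ⱼuᵢ + s ∂ᵢuⱼ + (α - s) δᵢⱼ div u`. For every `s` its row divergence is
`-Lu`; the free parameter `s` is later chosen so that `σ(u) : Du` is pointwise coercive. -/
def stress (α s : ℝ) (u : E3 → Fin 3 → ℝ) (x : E3) (i j : Fin 3) : ℝ :=
  pd j (fun z => u z i) x + s * pd i (fun z => u z j) x +
    (if i = j then (α - s) else 0) * divg u x

lemma contDiffOn_comp {Ω : Set E3} {u : E3 → Fin 3 → ℝ} (hu : ContDiffOn ℝ (⊤ : ℕ∞) u Ω)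
    (i : Fin 3) : ContDiffOn ℝ (⊤ : ℕ∞) (fun z => u z i) Ω :=
  (contDiffOn_pi.1 hu) i

lemma contDiffOn_divg {Ω : Set E3} (hΩ : IsOpen Ω) {u : E3 → Fin 3 → ℝ}
    (hu : ContDiffOn ℝ (⊤ : ℕ∞) u Ω) : ContDiffOn ℝ (⊤ : ℕ∞) (divg u) Ω :=
  ContDiffOn.sum fun k _ => contDiffOn_pd hΩ (contDiffOn_comp hu k) k

lemma contDiffOn_stress {Ω : Set E3} (hΩ : IsOpen Ω) {u : E3 → Fin 3 → ℝ}
    (hu : ContDiffOn ℝ (⊤ : ℕ∞) u Ω) (α s : ℝ) (i j : Fin 3) :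
    ContDiffOn ℝ (⊤ : ℕ∞) (fun x => stress α s u x i j) Ω :=
  ((contDiffOn_pd hΩ (contDiffOn_comp hu i) j).add
    (contDiffOn_const.mul (contDiffOn_pd hΩ (contDiffOn_comp hu j) i))).add
    (contDiffOn_const.mul (contDiffOn_divg hΩ hu))

lemma div_stress {Ω : Set E3} (hΩ : IsOpen Ω) {u : E3 → Fin 3 → ℝ}
    (hu : ContDiffOn ℝ (⊤ : ℕ∞) u Ω) (α s : ℝ) (i : Fin 3) {x : E3} (hx : x ∈ Ω) :
    ∑ j, pd j (fun z => stress α s u z i j) x = - lame α u x i := by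
  have hpd : ∀ a b, DifferentiableAt ℝ (pd a (fun z => u z b)) x := fun a b =>
    (contDiffOn_pd hΩ (contDiffOn_comp hu b) a).dAt hΩ hx
  have hdiv : DifferentiableAt ℝ (divg u) x := (contDiffOn_divg hΩ hu).dAt hΩ hx
  have h1 : ∀ j, pd j (fun z => stress α s u z i j) x =
      pd j (pd j (fun z => u z i)) x + s * pd i (pd j (fun z => u z j)) x +
      (if i = j then (α - s) else 0) * pd j (divg u) x := by
    intro j
    unfold stress
    rw [pd_add (by exact (hpd j i).add ((hpd i j).const_mul s))
      (by exact hdiv.const_mul _),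
      pd_add (by exact hpd j i) (by exact (hpd i j).const_mul s),
      pd_const_mul (f := fun z => pd i (fun y => u y j) z) (hpd i j),
      pd_const_mul hdiv]
    rw [show pd j (fun z => pd i (fun y => u y j) z) x = pd i (pd j (fun y => u y j)) x from
      pd_comm hΩ (contDiffOn_comp hu j) hx j i]
  have h2 : pd i (divg u) x = ∑ j, pd i (pd j (fun z => u z j)) x := by
    unfold divg
    rw [pd_sum _ (fun k _ => by exact hpd k k)]
  simp_rw [h1, Finset.sum_add_distrib, ← Finset.mul_sum, ← h2]
  simp only [ite_mul, zero_mul, Finset.sum_ite_eq, Finset.mem_univ, if_true, lame, lap]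
  ring

/-- Weak form of `Lu = 0`. The field `∑ᵢ σᵢⱼ(u) wᵢ` is smooth on all of `ℝ³` because `w` vanishes near
the complement of `Ω`, where `u` is arbitrary, so its divergence integrates to zero. -/
lemma weak_form {Ω : Set E3} (hΩ : IsOpen Ω) {u w : E3 → Fin 3 → ℝ}
    (hu : ContDiffOn ℝ (⊤ : ℕ∞) u Ω) (hw : IsTestOn Ω w) (α s : ℝ)
    (hL : ∀ x ∈ Ω, ∀ i, lame α u x i * w x i = 0) :
    ∫ x in Ω, ∑ i, ∑ j, stress α s u x i j * pd j (fun z => w z i) x = 0 := by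
  obtain ⟨hws, hwc, hwΩ⟩ := hw
  have hw0 : ∀ x, x ∉ Ω → w =ᶠ[nhds x] 0 := fun x hx =>
    notMem_tsupport_iff_eventuallyEq.1 fun h => hx (hwΩ h)
  have hwi : ∀ i, ContDiff ℝ (⊤ : ℕ∞) (fun z => w z i) := fun i => contDiff_pi.1 hws i
  let f : Fin 3 → E3 → ℝ := fun j x => ∑ i, stress α s u x i j * w x i
  have hf : ∀ j, ContDiff ℝ (⊤ : ℕ∞) (f j) := by
    intro j
    rw [contDiff_iff_contDiffAt]
    intro x
    by_cases hx : x ∈ Ω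
    · exact ContDiffAt.sum fun i _ =>
        ((contDiffOn_stress hΩ hu α s i j).contDiffAt (hΩ.mem_nhds hx)).mul (hwi i).contDiffAt
    · refine (contDiffAt_const (c := (0 : ℝ))).congr_of_eventuallyEq ?_
      filter_upwards [hw0 x hx] with z hz
      simp [f, hz]
  have hfc : ∀ j, HasCompactSupport (f j) := by
    intro j
    refine hwc.mono fun x hx => ?_
    contrapose! hx
    have : w x = 0 := by simpa using hx
    simp [f, this]
  have hpt : ∀ x, ∑ j, pd j (f j) x = ∑ i, ∑ j, stress α s u x i j * pd j (fun z => w z i) x := by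
    intro x
    by_cases hx : x ∈ Ω
    · have hS : ∀ i j, DifferentiableAt ℝ (fun z => stress α s u z i j) x := fun i j =>
        (contDiffOn_stress hΩ hu α s i j).dAt hΩ hx
      have hW : ∀ i, DifferentiableAt ℝ (fun z => w z i) x := fun i =>
        (hwi i).differentiable (by simp) x
      have h1 : ∀ j, pd j (f j) x = ∑ i, (stress α s u x i j * pd j (fun z => w z i) x +
          w x i * pd j (fun z => stress α s u z i j) x) := by
        intro j
        refine (pd_sum Finset.univ (f := fun i z => stress α s u z i j * w z i)
          (fun i _ => (hS i j).mul (hW i)) j).trans ?_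
        exact Finset.sum_congr rfl fun i _ => pd_mul (hS i j) (hW i) j
      simp_rw [h1]
      rw [Finset.sum_comm]
      refine Finset.sum_congr rfl fun i _ => ?_
      rw [Finset.sum_add_distrib, ← Finset.mul_sum, div_stress hΩ hu α s i hx]
      linarith [hL x hx i]
    · have h1 : ∀ j, pd j (f j) x = 0 := by
        intro j
        rw [pd_congr (g := fun _ => 0) _ j, pd_zero]
        filter_upwards [hw0 x hx] with z hz
        simp [f, hz]
      have h2 : ∀ i j, pd j (fun z => w z i) x = 0 := by
        intro i j
        rw [pd_congr (g := fun _ => 0) _ j, pd_zero]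
        filter_upwards [hw0 x hx] with z hz
        simp [hz]
      simp [h1, h2]
  rw [setIntegral_eq_integral_of_forall_compl_eq_zero]
  · simp_rw [← hpt]
    rw [integral_finsetSum]
    · exact Finset.sum_eq_zero fun j _ =>
        integral_pd_eq_zero ((hf j).of_le (by exact_mod_cast le_top)) (hfc j) j
    · intro j _
      exact (contDiff_pd (hf j) j).continuous.integrable_of_hasCompactSupport
        ((hfc j).fderiv_apply ℝ _)
  · intro x hx
    refine Finset.sum_eq_zero fun i _ => Finset.sum_eq_zero fun j _ => ?_
    rw [pd_congr (f := fun z => w z i) (g := fun _ => 0) _ j, pd_zero, mul_zero]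
    filter_upwards [hw0 x hx] with z hz
    simp [hz]

/-! ### Pointwise estimates for the stress -/

/-- The squared Frobenius norm `|Du(x)|²`. -/
def gradSq (u : E3 → Fin 3 → ℝ) (x : E3) : ℝ := ∑ i, ∑ k, (pd k (fun z => u z i) x) ^ 2

/-- The squared Euclidean norm `|u(x)|²`. -/
def normSq (u : E3 → Fin 3 → ℝ) (x : E3) : ℝ := ∑ i, (u x i) ^ 2

lemma gradSq_nonneg (u : E3 → Fin 3 → ℝ) (x : E3) : 0 ≤ gradSq u x := by
  unfold gradSq; positivity

lemma normSq_nonneg (u : E3 → Fin 3 → ℝ) (x : E3) : 0 ≤ normSq u x := by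
  unfold normSq; positivity

/-- With `s = ε - 1` one has
`σ(u) : Du - ε|Du|² = (1 - ε)|curl u|² + (1 + α - ε)(div u)²`,
so `σ(u) : Du` controls `ε|Du|²` pointwise for `ε = min 1 (1 + α)`, which is positive since
`α > -1`. -/
lemma stress_coercive {α ε : ℝ} (h1 : ε ≤ 1) (h2 : ε ≤ 1 + α) (u : E3 → Fin 3 → ℝ) (x : E3) :
    ε * gradSq u x ≤ ∑ i, ∑ j, stress α (ε - 1) u x i j * pd j (fun z => u z i) x := by
  set P : Fin 3 → Fin 3 → ℝ := fun i j => pd j (fun z => u z i) x with hP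
  have key : ∑ i, ∑ j, stress α (ε - 1) u x i j * pd j (fun z => u z i) x - ε * gradSq u x =
      (1 - ε) * ((P 0 1 - P 1 0) ^ 2 + (P 0 2 - P 2 0) ^ 2 + (P 1 2 - P 2 1) ^ 2) +
      (1 + α - ε) * (P 0 0 + P 1 1 + P 2 2) ^ 2 := by
    simp [stress, gradSq, divg, Fin.sum_univ_three, hP]
    ring
  have h3 : 0 ≤ 1 - ε := by linarith
  have h4 : 0 ≤ 1 + α - ε := by linarith
  have : 0 ≤ (1 - ε) * ((P 0 1 - P 1 0) ^ 2 + (P 0 2 - P 2 0) ^ 2 + (P 1 2 - P 2 1) ^ 2) +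
      (1 + α - ε) * (P 0 0 + P 1 1 + P 2 2) ^ 2 := by positivity
  linarith

lemma stress_sq_le (α s : ℝ) (u : E3 → Fin 3 → ℝ) (x : E3) :
    ∑ i, ∑ j, (stress α s u x i j) ^ 2 ≤
      3 * (1 + s ^ 2 + 9 * (α - s) ^ 2) * gradSq u x := by
  have h3 : ∀ a b c : ℝ, (a + b + c) ^ 2 ≤ 3 * (a ^ 2 + b ^ 2 + c ^ 2) := fun a b c => by
    nlinarith [sq_nonneg (a - b), sq_nonneg (b - c), sq_nonneg (a - c)]
  have hdiv : (divg u x) ^ 2 ≤ 3 * gradSq u x := by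
    simp only [divg, gradSq, Fin.sum_univ_three]
    refine (h3 _ _ _).trans ?_
    gcongr 3 * ?_
    nlinarith [sq_nonneg (pd 0 (fun z => u z 1) x), sq_nonneg (pd 0 (fun z => u z 2) x),
      sq_nonneg (pd 1 (fun z => u z 0) x), sq_nonneg (pd 1 (fun z => u z 2) x),
      sq_nonneg (pd 2 (fun z => u z 0) x), sq_nonneg (pd 2 (fun z => u z 1) x)]
  have hterm : ∀ i j, (stress α s u x i j) ^ 2 ≤ 3 * ((pd j (fun z => u z i) x) ^ 2 +
      s ^ 2 * (pd i (fun z => u z j) x) ^ 2 +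
      (if i = j then (α - s) ^ 2 else 0) * (divg u x) ^ 2) := by
    intro i j
    refine (h3 _ _ _).trans (le_of_eq ?_)
    split_ifs <;> ring
  calc _ ≤ ∑ i, ∑ j, 3 * ((pd j (fun z => u z i) x) ^ 2 +
      s ^ 2 * (pd i (fun z => u z j) x) ^ 2 +
      (if i = j then (α - s) ^ 2 else 0) * (divg u x) ^ 2) :=
        Finset.sum_le_sum fun i _ => Finset.sum_le_sum fun j _ => hterm i j
    _ = 3 * ((1 + s ^ 2) * gradSq u x + 3 * (α - s) ^ 2 * (divg u x) ^ 2) := by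
        simp [gradSq, Fin.sum_univ_three]
        ring
    _ ≤ _ := by nlinarith [mul_le_mul_of_nonneg_left hdiv (sq_nonneg (α - s))]

/-- The flux `∑ᵢⱼ σᵢⱼ(u) ∂ⱼ(ζ² vᵢ)`, with the derivative expanded by the product rule. -/
def flux (α s : ℝ) (ζ : E3 → ℝ) (u v : E3 → Fin 3 → ℝ) (x : E3) : ℝ :=
  ∑ i, ∑ j, stress α s u x i j *
    (ζ x ^ 2 * pd j (fun z => v z i) x + 2 * ζ x * pd j ζ x * v x i)

lemma abs_flux_le {α s m δ : ℝ} (hδ : 0 < δ) {ζ : E3 → ℝ} (u v : E3 → Fin 3 → ℝ) {x : E3}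
    (hζ : |ζ x| ≤ 1) (hζ' : ∀ j, |pd j ζ x| ≤ m) :
    |flux α s ζ u v x| ≤ δ * (3 * (1 + s ^ 2 + 9 * (α - s) ^ 2)) * gradSq u x +
      δ⁻¹ * (2 + 24 * m ^ 2) * (normSq v x + gradSq v x) := by
  have hz : ζ x ^ 2 ≤ 1 := by rw [← sq_abs]; exact pow_le_one₀ (abs_nonneg _) hζ
  have hterm : ∀ i j, |stress α s u x i j *
      (ζ x ^ 2 * pd j (fun z => v z i) x + 2 * ζ x * pd j ζ x * v x i)| ≤
      δ * (stress α s u x i j) ^ 2 +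
        δ⁻¹ * (2 * (pd j (fun z => v z i) x) ^ 2 + 8 * m ^ 2 * (v x i) ^ 2) := by
    intro i j
    have hg : (pd j ζ x) ^ 2 ≤ m ^ 2 := by
      rw [← sq_abs]; exact pow_le_pow_left₀ (abs_nonneg _) (hζ' j) 2
    generalize stress α s u x i j = S
    generalize pd j (fun z => v z i) x = D
    generalize pd j ζ x = g at hg
    generalize v x i = d
    generalize ζ x = z at hz
    have h1 : (z ^ 2 * D + 2 * z * g * d) ^ 2 ≤ 2 * D ^ 2 + 8 * m ^ 2 * d ^ 2 := by
      have a1 : (z ^ 2 * D + 2 * z * g * d) ^ 2 ≤ 2 * (z ^ 2 * D) ^ 2 + 2 * (2 * z * g * d) ^ 2 := by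
        nlinarith [sq_nonneg (z ^ 2 * D - 2 * z * g * d)]
      have a2 : (z ^ 2 * D) ^ 2 ≤ D ^ 2 := by
        have : (z ^ 2) ^ 2 ≤ 1 := pow_le_one₀ (sq_nonneg z) hz
        nlinarith [mul_le_mul_of_nonneg_right this (sq_nonneg D)]
      have a3 : (2 * z * g * d) ^ 2 ≤ 4 * m ^ 2 * d ^ 2 := by
        have : z ^ 2 * g ^ 2 ≤ 1 * m ^ 2 := mul_le_mul hz hg (sq_nonneg _) zero_le_one
        nlinarith [mul_le_mul_of_nonneg_right this (sq_nonneg d)]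
      linarith
    generalize z ^ 2 * D + 2 * z * g * d = T at h1
    have h2 : |S * T| ≤ δ * S ^ 2 + δ⁻¹ * T ^ 2 := by
      have e : δ * δ⁻¹ = 1 := mul_inv_cancel₀ hδ.ne'
      have hp : 0 ≤ δ⁻¹ := by positivity
      have b1 : 0 ≤ δ⁻¹ * (δ * |S| - |T|) ^ 2 := by positivity
      have b2 : δ⁻¹ * (δ * |S| - |T|) ^ 2 = δ * S ^ 2 + δ⁻¹ * T ^ 2 - 2 * |S * T| := by
        rw [abs_mul, ← sq_abs S, ← sq_abs T]
        linear_combination (δ * |S| ^ 2 - 2 * |S| * |T|) * e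
      linarith [abs_nonneg (S * T)]
    have := mul_le_mul_of_nonneg_left h1 (inv_nonneg.2 hδ.le)
    linarith
  calc |flux α s ζ u v x| ≤ ∑ i, ∑ j, (δ * (stress α s u x i j) ^ 2 +
        δ⁻¹ * (2 * (pd j (fun z => v z i) x) ^ 2 + 8 * m ^ 2 * (v x i) ^ 2)) := by
        refine (Finset.abs_sum_le_sum_abs _ _).trans (Finset.sum_le_sum fun i _ => ?_)
        exact (Finset.abs_sum_le_sum_abs _ _).trans (Finset.sum_le_sum fun j _ => hterm i j)
    _ = δ * ∑ i, ∑ j, (stress α s u x i j) ^ 2 +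
        δ⁻¹ * (2 * gradSq v x + 24 * m ^ 2 * normSq v x) := by
        simp [gradSq, normSq, Fin.sum_univ_three]
        ring
    _ ≤ _ := by
        have h1 := mul_le_mul_of_nonneg_left (stress_sq_le α s u x) hδ.le
        have h2 : 2 * gradSq v x + 24 * m ^ 2 * normSq v x ≤
            (2 + 24 * m ^ 2) * (normSq v x + gradSq v x) := by
          nlinarith [gradSq_nonneg v x, normSq_nonneg v x,
            mul_nonneg (sq_nonneg m) (gradSq_nonneg v x)]
        have h3 := mul_le_mul_of_nonneg_left h2 (inv_nonneg.2 hδ.le)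
        linarith

/-- The pointwise inequality behind the Caccioppoli estimate: coercivity of the stress, with the cross
term `2ζ σᵢⱼ ∂ⱼζ uᵢ` absorbed by Young's inequality with weight `a`. -/
lemma flux_self_ge {α ε m a : ℝ} (ha : 0 < a) (h1 : ε ≤ 1) (h2 : ε ≤ 1 + α)
    (haK : a * (3 * (1 + (ε - 1) ^ 2 + 9 * (α - (ε - 1)) ^ 2)) ≤ ε / 2)
    {ζ : E3 → ℝ} (u : E3 → Fin 3 → ℝ) {x : E3} (hζ' : ∀ j, |pd j ζ x| ≤ m) :
    ε / 2 * (ζ x ^ 2 * gradSq u x) - 3 * a⁻¹ * m ^ 2 * normSq u x ≤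
      flux α (ε - 1) ζ u u x := by
  have hterm : ∀ i j, -(a * (ζ x ^ 2 * (stress α (ε - 1) u x i j) ^ 2) +
        a⁻¹ * (m ^ 2 * (u x i) ^ 2)) ≤
      stress α (ε - 1) u x i j * (2 * ζ x * pd j ζ x * u x i) := by
    intro i j
    have hg : (pd j ζ x) ^ 2 ≤ m ^ 2 := by
      rw [← sq_abs]; exact pow_le_pow_left₀ (abs_nonneg _) (hζ' j) 2
    generalize stress α (ε - 1) u x i j = S
    generalize pd j ζ x = g at hg
    generalize u x i = d
    generalize ζ x = z
    have e : a * a⁻¹ = 1 := mul_inv_cancel₀ ha.ne'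
    have b1 : 0 ≤ a⁻¹ * (a * (z * S) + g * d) ^ 2 := by positivity
    have b2 : a⁻¹ * (a * (z * S) + g * d) ^ 2 =
        a * (z ^ 2 * S ^ 2) + a⁻¹ * (g ^ 2 * d ^ 2) + S * (2 * z * g * d) := by
      linear_combination (a * (z * S) ^ 2 + 2 * (z * S) * (g * d)) * e
    have b3 : a⁻¹ * (g ^ 2 * d ^ 2) ≤ a⁻¹ * (m ^ 2 * d ^ 2) := by gcongr
    linarith
  have hsum := Finset.sum_le_sum (s := Finset.univ) fun i _ =>
    Finset.sum_le_sum (s := Finset.univ) fun j _ => hterm i j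
  have e1 : ∑ i, ∑ j, -(a * (ζ x ^ 2 * (stress α (ε - 1) u x i j) ^ 2) +
        a⁻¹ * (m ^ 2 * (u x i) ^ 2)) =
      -(a * ζ x ^ 2 * ∑ i, ∑ j, (stress α (ε - 1) u x i j) ^ 2 +
        3 * a⁻¹ * m ^ 2 * normSq u x) := by
    simp [normSq, Fin.sum_univ_three]
    ring
  have e2 : flux α (ε - 1) ζ u u x =
      ζ x ^ 2 * ∑ i, ∑ j, stress α (ε - 1) u x i j * pd j (fun z => u z i) x +
      ∑ i, ∑ j, stress α (ε - 1) u x i j * (2 * ζ x * pd j ζ x * u x i) := by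
    simp only [flux, Finset.mul_sum, ← Finset.sum_add_distrib]
    refine Finset.sum_congr rfl fun i _ => Finset.sum_congr rfl fun j _ => ?_
    ring
  have h3 := mul_le_mul_of_nonneg_left (stress_coercive h1 h2 u x) (sq_nonneg (ζ x))
  have h4 := mul_le_mul_of_nonneg_left (stress_sq_le α (ε - 1) u x)
    (mul_nonneg ha.le (sq_nonneg (ζ x)))
  have h5 := mul_le_mul_of_nonneg_right haK
    (mul_nonneg (sq_nonneg (ζ x)) (gradSq_nonneg u x))
  rw [e1] at hsum
  rw [e2]
  linarith

/-! ### The Caccioppoli inequality -/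

lemma integrableOn_of_le {Ω : Set E3} (hΩ : IsOpen Ω) {f g : E3 → ℝ} (hf : ContinuousOn f Ω)
    (hg : IntegrableOn g Ω) (h : ∀ x ∈ Ω, |f x| ≤ g x) : IntegrableOn f Ω := by
  refine Integrable.mono' hg (hf.aestronglyMeasurable hΩ.measurableSet) ?_
  filter_upwards [ae_restrict_mem hΩ.measurableSet] with x hx
  exact h x hx

lemma continuousOn_normSq {Ω : Set E3} {u : E3 → Fin 3 → ℝ}
    (hu : ContDiffOn ℝ (⊤ : ℕ∞) u Ω) : ContinuousOn (normSq u) Ω :=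
  continuousOn_finsetSum _ fun i _ => (contDiffOn_comp hu i).continuousOn.pow 2

lemma continuousOn_gradSq {Ω : Set E3} (hΩ : IsOpen Ω) {u : E3 → Fin 3 → ℝ}
    (hu : ContDiffOn ℝ (⊤ : ℕ∞) u Ω) : ContinuousOn (gradSq u) Ω :=
  continuousOn_finsetSum _ fun i _ => continuousOn_finsetSum _ fun k _ =>
    (contDiffOn_pd hΩ (contDiffOn_comp hu i) k).continuousOn.pow 2

lemma continuousOn_flux {Ω : Set E3} (hΩ : IsOpen Ω) {u v : E3 → Fin 3 → ℝ} {ζ : E3 → ℝ}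
    (hu : ContDiffOn ℝ (⊤ : ℕ∞) u Ω) (hv : ContDiffOn ℝ (⊤ : ℕ∞) v Ω)
    (hζ : ContDiff ℝ (⊤ : ℕ∞) ζ) (α s : ℝ) : ContinuousOn (flux α s ζ u v) Ω := by
  refine continuousOn_finsetSum _ fun i _ => continuousOn_finsetSum _ fun j _ => ?_
  refine (contDiffOn_stress hΩ hu α s i j).continuousOn.mul (ContinuousOn.add ?_ ?_)
  · exact (hζ.continuous.continuousOn.pow 2).mul
      (contDiffOn_pd hΩ (contDiffOn_comp hv i) j).continuousOn
  · exact ((continuousOn_const.mul hζ.continuous.continuousOn).mul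
      (contDiff_pd hζ j).continuous.continuousOn).mul (contDiffOn_comp hv i).continuousOn

/-- The weak form may be tested with `ζ² u` itself: it holds for `ζ² uₙ`, where `uₙ → u` in `H¹`, and
`abs_flux_le` bounds the error by `δ K ∫|Du|² + C δ⁻¹ ‖u - uₙ‖²` for every `δ > 0`. -/
lemma flux_self_integral_eq_zero {Ω : Set E3} (hΩ : IsOpen Ω) {u : E3 → Fin 3 → ℝ}
    (hu : MemH10 Ω u) {ζ : E3 → ℝ} (hζ : ContDiff ℝ (⊤ : ℕ∞) ζ) {m : ℝ}
    (hζ1 : ∀ x, |ζ x| ≤ 1) (hζ' : ∀ j x, |pd j ζ x| ≤ m) (α s : ℝ)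
    (hL : ∀ x ∈ Ω, ζ x ≠ 0 → ∀ i, lame α u x i = 0) :
    IntegrableOn (flux α s ζ u u) Ω ∧ ∫ x in Ω, flux α s ζ u u x = 0 := by
  obtain ⟨hus, hui, un, hun, hlim⟩ := hu
  set K : ℝ := 3 * (1 + s ^ 2 + 9 * (α - s) ^ 2) with hK
  have hK0 : 0 ≤ K := by positivity
  set c : ℝ := 2 + 24 * m ^ 2 with hc
  have hc0 : 0 ≤ c := by positivity
  have hui' : IntegrableOn (fun x => normSq u x + gradSq u x) Ω := hui
  have hlim' : Tendsto (fun n => ∫ x in Ω, (normSq (fun z i => u z i - un n z i) x +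
      gradSq (fun z i => u z i - un n z i) x)) atTop (nhds 0) := hlim
  have hns : ∀ n, ContDiffOn ℝ (⊤ : ℕ∞) (un n) Ω := fun n => (hun n).1.contDiffOn
  have hds : ∀ n, ContDiffOn ℝ (⊤ : ℕ∞) (fun z i => u z i - un n z i) Ω := fun n =>
    hus.sub (hns n)
  have hgi : IntegrableOn (gradSq u) Ω :=
    integrableOn_of_le hΩ (continuousOn_gradSq hΩ hus) hui' fun x _ => by
      rw [abs_of_nonneg (gradSq_nonneg u x)]; linarith [normSq_nonneg u x]
  have hni : ∀ n, IntegrableOn (fun x => normSq (un n) x + gradSq (un n) x) Ω := by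
    intro n
    refine Integrable.integrableOn ?_
    have hs : ContDiffOn ℝ (⊤ : ℕ∞) (un n) Set.univ := (hun n).1.contDiffOn
    have hcont : Continuous (fun x => normSq (un n) x + gradSq (un n) x) := by
      rw [← continuousOn_univ]
      exact (continuousOn_normSq hs).add (continuousOn_gradSq isOpen_univ hs)
    refine hcont.integrable_of_hasCompactSupport ?_
    refine HasCompactSupport.of_support_subset_isCompact (hun n).2.1 fun x hx => ?_
    contrapose! hx
    have h0 := notMem_tsupport_iff_eventuallyEq.1 hx
    have h1 : un n x = 0 := h0.self_of_nhds
    have h2 : ∀ i k, pd k (fun z => un n z i) x = 0 := by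
      intro i k
      rw [pd_congr (g := fun _ => 0) _ k, pd_zero]
      filter_upwards [h0] with z hz
      simp [hz]
    simp [normSq, gradSq, h1, h2]
  have hdpd : ∀ n, ∀ x ∈ Ω, ∀ i k, pd k (fun z => u z i - un n z i) x =
      pd k (fun z => u z i) x - pd k (fun z => un n z i) x := fun n x hx i k =>
    pd_sub ((contDiffOn_comp hus i).dAt hΩ hx) ((contDiffOn_comp (hns n) i).dAt hΩ hx) k
  have hdi : ∀ n, IntegrableOn (fun x => normSq (fun z i => u z i - un n z i) x +
      gradSq (fun z i => u z i - un n z i) x) Ω := by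
    intro n
    refine integrableOn_of_le hΩ
      ((continuousOn_normSq (hds n)).add (continuousOn_gradSq hΩ (hds n)))
      ((hui'.const_mul 2).add ((hni n).const_mul 2)) fun x hx => ?_
    rw [abs_of_nonneg (add_nonneg (normSq_nonneg _ _) (gradSq_nonneg _ _))]
    have hab : ∀ a b : ℝ, (a - b) ^ 2 ≤ 2 * a ^ 2 + 2 * b ^ 2 := fun a b => by
      nlinarith [sq_nonneg (a + b)]
    have h1 : normSq (fun z i => u z i - un n z i) x ≤ 2 * normSq u x + 2 * normSq (un n) x := by
      simp only [normSq, Finset.mul_sum, ← Finset.sum_add_distrib]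
      exact Finset.sum_le_sum fun i _ => hab _ _
    have h2 : gradSq (fun z i => u z i - un n z i) x ≤ 2 * gradSq u x + 2 * gradSq (un n) x := by
      simp only [gradSq, hdpd n x hx, Finset.mul_sum, ← Finset.sum_add_distrib]
      exact Finset.sum_le_sum fun i _ => Finset.sum_le_sum fun k _ => hab _ _
    simp only [Pi.add_apply]
    linarith
  have hfi : ∀ v, ContDiffOn ℝ (⊤ : ℕ∞) v Ω →
      IntegrableOn (fun x => normSq v x + gradSq v x) Ω → IntegrableOn (flux α s ζ u v) Ω := by
    intro v hv hvi
    refine integrableOn_of_le hΩ (continuousOn_flux hΩ hus hv hζ α s)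
      ((hgi.const_mul (1 * K)).add (hvi.const_mul (1⁻¹ * c))) fun x _ => ?_
    exact abs_flux_le one_pos u v (hζ1 x) (fun j => hζ' j x)
  refine ⟨hfi u hus hui', ?_⟩
  -- The weak form tested with `ζ² uₙ`
  have hzero : ∀ n, ∫ x in Ω, flux α s ζ u (un n) x = 0 := by
    intro n
    have hζ2 : ContDiff ℝ (⊤ : ℕ∞) (fun z => ζ z ^ 2) := hζ.pow 2
    have hwi : ∀ i, ContDiff ℝ (⊤ : ℕ∞) (fun z => un n z i) := contDiff_pi.1 (hun n).1
    have hsupp : Function.support (fun z i => ζ z ^ 2 * un n z i) ⊆ Function.support (un n) := by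
      intro x hx
      contrapose! hx
      have : un n x = 0 := by simpa using hx
      simp [this]
      rfl
    have hw : IsTestOn Ω (fun z i => ζ z ^ 2 * un n z i) :=
      ⟨contDiff_pi.2 fun i => hζ2.mul (hwi i), (hun n).2.1.mono hsupp,
        (closure_mono hsupp).trans (hun n).2.2⟩
    rw [← weak_form hΩ hus hw α s ?_]
    · refine integral_congr_ae (Eventually.of_forall fun x => ?_)
      refine Finset.sum_congr rfl fun i _ => Finset.sum_congr rfl fun j _ => ?_
      have hdζ : DifferentiableAt ℝ ζ x := hζ.differentiable (by simp) x
      have hdw : DifferentiableAt ℝ (fun z => un n z i) x := (hwi i).differentiable (by simp) x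
      have e1 : pd j (fun z => ζ z ^ 2) x = 2 * ζ x * pd j ζ x := by
        have : (fun z => ζ z ^ 2) = fun z => ζ z * ζ z := by ext; ring
        rw [this, pd_mul hdζ hdζ]; ring
      rw [pd_mul (f := fun z => ζ z ^ 2) (hdζ.pow 2) hdw, e1]
      ring
    · intro x hx i
      by_cases h : ζ x = 0
      · simp [h]
      · simp [hL x hx h i]
  have hbound : ∀ δ > 0, ∀ n, |∫ x in Ω, flux α s ζ u u x| ≤
      δ * K * (∫ x in Ω, gradSq u x) + δ⁻¹ * c * ∫ x in Ω,
        (normSq (fun z i => u z i - un n z i) x + gradSq (fun z i => u z i - un n z i) x) := by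
    intro δ hδ n
    have e : ∫ x in Ω, flux α s ζ u u x =
        ∫ x in Ω, flux α s ζ u (fun z i => u z i - un n z i) x := by
      rw [← sub_zero (∫ x in Ω, flux α s ζ u u x), ← hzero n,
        ← integral_sub (hfi u hus hui') (hfi _ (hns n) (hni n))]
      refine setIntegral_congr_fun hΩ.measurableSet fun x hx => ?_
      simp only [flux, hdpd n x hx, ← Finset.sum_sub_distrib]
      refine Finset.sum_congr rfl fun i _ => Finset.sum_congr rfl fun j _ => ?_
      ring
    rw [e, ← integral_const_mul, ← integral_const_mul,
      ← integral_add (hgi.const_mul _) ((hdi n).const_mul _)]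
    have hI : IntegrableOn (fun x => δ * K * gradSq u x + δ⁻¹ * c *
        (normSq (fun z i => u z i - un n z i) x + gradSq (fun z i => u z i - un n z i) x)) Ω :=
      (hgi.const_mul _).add ((hdi n).const_mul _)
    rw [← Real.norm_eq_abs]
    refine norm_integral_le_of_norm_le hI (Eventually.of_forall fun x => ?_)
    exact abs_flux_le hδ u _ (hζ1 x) (fun j => hζ' j x)
  have hbound2 : ∀ δ > 0, |∫ x in Ω, flux α s ζ u u x| ≤ δ * (K * ∫ x in Ω, gradSq u x) := by
    intro δ hδ
    have ht := (hlim'.const_mul (δ⁻¹ * c)).const_add (δ * K * (∫ x in Ω, gradSq u x))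
    have := ge_of_tendsto' ht (hbound δ hδ)
    linarith
  have ht : Tendsto (fun δ : ℝ => δ * (K * ∫ x in Ω, gradSq u x)) (nhdsWithin 0 (Set.Ioi 0))
      (nhds 0) := by
    have : Tendsto (fun δ : ℝ => δ * (K * ∫ x in Ω, gradSq u x)) (nhds 0)
        (nhds (0 * (K * ∫ x in Ω, gradSq u x))) := tendsto_id.mul_const _
    rw [zero_mul] at this
    exact this.mono_left nhdsWithin_le_nhds
  have hle : |∫ x in Ω, flux α s ζ u u x| ≤ 0 :=
    ge_of_tendsto ht (by filter_upwards [self_mem_nhdsWithin] with δ hδ using hbound2 δ hδ)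
  exact abs_nonpos_iff.1 hle

/-- Caccioppoli inequality `∫ ζ²|Du|² ≤ C m² ∫_S |u|²` for a cutoff `ζ` supported in `S` with
`|∂ⱼζ| ≤ m`, where `C` depends only on `α`. -/
lemma caccioppoli {α : ℝ} (hα : -1 < α) : ∃ C : ℝ, 0 ≤ C ∧ ∀ Ω : Set E3, IsOpen Ω →
    ∀ u : E3 → Fin 3 → ℝ, MemH10 Ω u → ∀ S : Set E3, MeasurableSet S →
    ∀ ζ : E3 → ℝ, ContDiff ℝ (⊤ : ℕ∞) ζ → ∀ m : ℝ,
    (∀ x, |ζ x| ≤ 1) → (∀ j x, |pd j ζ x| ≤ m) →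
    (∀ x, x ∉ S → ζ x = 0) →
    (∀ x ∈ Ω ∩ S, ∀ i, lame α u x i = 0) →
    IntegrableOn (fun x => ζ x ^ 2 * gradSq u x) Ω ∧
    IntegrableOn (S.indicator (normSq u)) Ω ∧
    ∫ x in Ω, ζ x ^ 2 * gradSq u x ≤ C * m ^ 2 * ∫ x in Ω, S.indicator (normSq u) x := by
  set ε : ℝ := min 1 (1 + α) with hε
  have hε0 : 0 < ε := lt_min one_pos (by linarith)
  have h1 : ε ≤ 1 := min_le_left _ _
  have h2 : ε ≤ 1 + α := min_le_right _ _
  set K : ℝ := 3 * (1 + (ε - 1) ^ 2 + 9 * (α - (ε - 1)) ^ 2) with hK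
  have hK0 : 0 < K := by positivity
  set a : ℝ := ε / 2 / K with ha
  have ha0 : 0 < a := by positivity
  have haK : a * K ≤ ε / 2 := by rw [ha, div_mul_cancel₀ _ hK0.ne']
  refine ⟨2 / ε * (3 * a⁻¹), by positivity, ?_⟩
  intro Ω hΩ u hu S hS ζ hζ m hζ1 hζ' hζS hL
  obtain ⟨hFi, hF0⟩ := flux_self_integral_eq_zero hΩ hu hζ hζ1 hζ' α (ε - 1)
    (fun x hx hz i => hL x ⟨hx, by by_contra h; exact hz (hζS x h)⟩ i)
  have hui : IntegrableOn (fun x => normSq u x + gradSq u x) Ω := hu.2.1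
  have hni : IntegrableOn (normSq u) Ω :=
    integrableOn_of_le hΩ (continuousOn_normSq hu.1) hui fun x _ => by
      rw [abs_of_nonneg (normSq_nonneg u x)]; linarith [gradSq_nonneg u x]
  have hzi : IntegrableOn (fun x => ζ x ^ 2 * gradSq u x) Ω :=
    integrableOn_of_le hΩ
      ((hζ.continuous.continuousOn.pow 2).mul (continuousOn_gradSq hΩ hu.1)) hui fun x _ => by
      have hz : ζ x ^ 2 ≤ 1 := by rw [← sq_abs]; exact pow_le_one₀ (abs_nonneg _) (hζ1 x)
      rw [abs_of_nonneg (mul_nonneg (sq_nonneg _) (gradSq_nonneg u x))]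
      nlinarith [normSq_nonneg u x, gradSq_nonneg u x]
  have hSi : IntegrableOn (S.indicator (normSq u)) Ω := hni.indicator hS
  refine ⟨hzi, hSi, ?_⟩
  have hpt : ∀ x, ε / 2 * (ζ x ^ 2 * gradSq u x) ≤
      flux α (ε - 1) ζ u u x + 3 * a⁻¹ * m ^ 2 * S.indicator (normSq u) x := by
    intro x
    by_cases hx : x ∈ S
    · rw [Set.indicator_of_mem hx]
      linarith [flux_self_ge ha0 h1 h2 haK u (x := x) (ζ := ζ) (fun j => hζ' j x)]
    · rw [Set.indicator_of_notMem hx]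
      simp [flux, hζS x hx]
  have hint : ε / 2 * ∫ x in Ω, ζ x ^ 2 * gradSq u x ≤
      3 * a⁻¹ * m ^ 2 * ∫ x in Ω, S.indicator (normSq u) x := by
    have := integral_mono (hzi.const_mul (ε / 2))
      (Integrable.add hFi (hSi.const_mul (3 * a⁻¹ * m ^ 2))) hpt
    simp only [Pi.add_apply] at this
    rw [integral_const_mul, integral_add hFi (hSi.const_mul _), hF0, integral_const_mul,
      zero_add] at this
    exact this
  have := mul_le_mul_of_nonneg_left hint (by positivity : (0 : ℝ) ≤ 2 / ε)
  have e : 2 / ε * (ε / 2 * ∫ x in Ω, ζ x ^ 2 * gradSq u x) =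
      ∫ x in Ω, ζ x ^ 2 * gradSq u x := by field_simp
  rw [e] at this
  linarith

/-! ### Cutoffs, the fundamental matrix and the commutator -/

lemma exists_pd_bounds {η : E3 → ℝ} (hη : ContDiff ℝ (⊤ : ℕ∞) η) (hc : HasCompactSupport η) :
    ∃ M : ℝ, 0 < M ∧ (∀ x, |η x| ≤ M) ∧ (∀ i x, |pd i η x| ≤ M) ∧
      ∀ i j x, |pd i (pd j η) x| ≤ M := by
  have hb : ∀ f : E3 → ℝ, Continuous f → HasCompactSupport f → ∃ C, 0 ≤ C ∧ ∀ x, |f x| ≤ C := by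
    intro f hf hfc
    obtain ⟨C, hC⟩ := hfc.exists_bound_of_continuous hf
    exact ⟨C, (norm_nonneg _).trans (hC 0), hC⟩
  have hc1 : ∀ i, HasCompactSupport (pd i η) := fun i => hc.fderiv_apply ℝ _
  have hc2 : ∀ i j, HasCompactSupport (pd i (pd j η)) := fun i j => (hc1 j).fderiv_apply ℝ _
  obtain ⟨C0, h0, hC0⟩ := hb η hη.continuous hc
  choose C1 h1 hC1 using fun i => hb (pd i η) (contDiff_pd hη i).continuous (hc1 i)
  choose C2 h2 hC2 using fun i j => hb (pd i (pd j η))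
    (contDiff_pd (contDiff_pd hη j) i).continuous (hc2 i j)
  have a1 : 0 ≤ ∑ i, C1 i := Finset.sum_nonneg fun i _ => h1 i
  have a2 : 0 ≤ ∑ i, ∑ j, C2 i j :=
    Finset.sum_nonneg fun i _ => Finset.sum_nonneg fun j _ => h2 i j
  refine ⟨1 + C0 + ∑ i, C1 i + ∑ i, ∑ j, C2 i j, by linarith, fun x => ?_, fun i x => ?_,
    fun i j x => ?_⟩
  · linarith [hC0 x]
  · have := Finset.single_le_sum (f := C1) (fun i _ => h1 i) (Finset.mem_univ i)
    linarith [hC1 i x]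
  · have b1 := Finset.single_le_sum (f := C2 i) (fun j _ => h2 i j) (Finset.mem_univ j)
    have b2 := Finset.single_le_sum (f := fun i => ∑ j, C2 i j)
      (fun i _ => Finset.sum_nonneg fun j _ => h2 i j) (Finset.mem_univ i)
    linarith [hC2 i j x]

/-- A fixed cutoff of the annulus `1 < |x| < 2` that equals `1` where `4/3 ≤ |x| ≤ 5/3`. -/
lemma exists_cutoff : ∃ (ζ : E3 → ℝ) (M : ℝ), ContDiff ℝ (⊤ : ℕ∞) ζ ∧ 0 < M ∧
    (∀ x, |ζ x| ≤ 1) ∧ (∀ j x, |pd j ζ x| ≤ M) ∧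
    (∀ x, ¬ (1 < ‖x‖ ∧ ‖x‖ < 2) → ζ x = 0) ∧
    (∀ x, 4 / 3 ≤ ‖x‖ → ‖x‖ ≤ 5 / 3 → ζ x = 1) := by
  let b1 : ContDiffBump (0 : E3) := ⟨5 / 3, 2, by norm_num, by norm_num⟩
  let b2 : ContDiffBump (0 : E3) := ⟨1, 4 / 3, by norm_num, by norm_num⟩
  have hs : ContDiff ℝ (⊤ : ℕ∞) (fun x => b1 x * (1 - b2 x)) :=
    b1.contDiff.mul (contDiff_const.sub b2.contDiff)
  have hcs : HasCompactSupport (fun x => b1 x * (1 - b2 x)) :=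
    HasCompactSupport.mul_right b1.hasCompactSupport
  obtain ⟨M, hM, -, hM1, -⟩ := exists_pd_bounds hs hcs
  refine ⟨fun x => b1 x * (1 - b2 x), M, hs, hM, fun x => ?_, hM1, fun x hx => ?_,
    fun x h1 h2 => ?_⟩
  · rw [abs_of_nonneg (mul_nonneg b1.nonneg (sub_nonneg.2 b2.le_one))]
    exact mul_le_one₀ b1.le_one (sub_nonneg.2 b2.le_one) (by linarith [b2.nonneg' x])
  · by_cases h : 1 < ‖x‖
    · have : 2 ≤ ‖x‖ := by by_contra h'; exact hx ⟨h, not_le.1 h'⟩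
      simp [b1.zero_of_le_dist (x := x) (by simpa [b1] using this)]
    · simp [b2.one_of_mem_closedBall (x := x) (by simpa [b2] using h)]
  · simp [b1.one_of_mem_closedBall (x := x) (by simpa [b1] using h2),
      b2.zero_of_le_dist (x := x) (by simpa [b2] using h1)]

lemma abs_Phi_le (α : ℝ) (x : E3) (i j : Fin 3) :
    |Phi α x i j| ≤ |cA α| * (1 + |α / (α + 2)|) * ‖x‖⁻¹ := by
  have h1 : |(if i = j then (1 : ℝ) else 0)| ≤ 1 := by split_ifs <;> simp
  have h2 : |(α / (α + 2)) * (x i * x j) / ‖x‖ ^ 2| ≤ |α / (α + 2)| := by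
    rw [mul_div_assoc, abs_mul]
    refine mul_le_of_le_one_right (abs_nonneg _) ?_
    rw [abs_div, abs_mul, abs_of_nonneg (sq_nonneg ‖x‖)]
    refine div_le_one_of_le₀ ?_ (sq_nonneg _)
    rw [sq]
    exact mul_le_mul (PiLp.norm_apply_le x i) (PiLp.norm_apply_le x j) (abs_nonneg _)
      (norm_nonneg _)
  unfold Phi
  rw [abs_mul, abs_mul, abs_of_nonneg (inv_nonneg.2 (norm_nonneg x))]
  calc _ ≤ |cA α| * ‖x‖⁻¹ * (1 + |α / (α + 2)|) := by
        gcongr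
        exact (abs_add_le _ _).trans (add_le_add h1 h2)
    _ = _ := by ring

/-- The commutator formula for `L(hu)`. -/
lemma lame_mul {Ω : Set E3} (hΩ : IsOpen Ω) {u : E3 → Fin 3 → ℝ}
    (hu : ContDiffOn ℝ (⊤ : ℕ∞) u Ω) {h : E3 → ℝ} (hh : ContDiff ℝ (⊤ : ℕ∞) h) (α : ℝ)
    {x : E3} (hx : x ∈ Ω) (i : Fin 3) :
    lame α (fun z k => u z k * h z) x i = h x * lame α u x i -
      ∑ j, (u x i * pd j (pd j h) x + 2 * (pd j h x * pd j (fun z => u z i) x)) -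
      α * ∑ k, (u x k * pd i (pd k h) x + pd k h x * pd i (fun z => u z k) x +
        pd k (fun z => u z k) x * pd i h x) := by
  have hd1 : ∀ k, ∀ y ∈ Ω, DifferentiableAt ℝ (fun z => u z k) y := fun k y hy =>
    (contDiffOn_comp hu k).dAt hΩ hy
  have hd2 : ∀ j k, DifferentiableAt ℝ (pd j (fun z => u z k)) x := fun j k =>
    (contDiffOn_pd hΩ (contDiffOn_comp hu k) j).dAt hΩ hx
  have hh1 : ∀ y, DifferentiableAt ℝ h y := fun y => hh.differentiable (by simp) y
  have hh2 : ∀ j, DifferentiableAt ℝ (pd j h) x := fun j =>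
    (contDiff_pd hh j).differentiable (by simp) x
  have e1 : ∀ j k, pd j (fun z => u z k * h z) =ᶠ[nhds x]
      fun y => u y k * pd j h y + h y * pd j (fun z => u z k) y := by
    intro j k
    filter_upwards [hΩ.mem_nhds hx] with y hy
    exact pd_mul (hd1 k y hy) (hh1 y) j
  have d1 : ∀ j k, DifferentiableAt ℝ (pd j (fun z => u z k * h z)) x := by
    intro j k
    refine DifferentiableAt.congr_of_eventuallyEq ?_ (e1 j k)
    exact ((hd1 k x hx).mul (hh2 j)).add ((hh1 x).mul (hd2 j k))
  have e2 : ∀ i j k, pd i (pd j (fun z => u z k * h z)) x =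
      u x k * pd i (pd j h) x + pd j h x * pd i (fun z => u z k) x +
      (h x * pd i (pd j (fun z => u z k)) x + pd j (fun z => u z k) x * pd i h x) := by
    intro i j k
    rw [pd_congr (e1 j k) i,
      pd_add (f := fun y => u y k * pd j h y) (g := fun y => h y * pd j (fun z => u z k) y)
        ((hd1 k x hx).mul (hh2 j)) ((hh1 x).mul (hd2 j k)),
      pd_mul (hd1 k x hx) (hh2 j), pd_mul (hh1 x) (hd2 j k)]
  have e3 : pd i (divg (fun z k => u z k * h z)) x =
      ∑ k, pd i (pd k (fun z => u z k * h z)) x :=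
    pd_sum Finset.univ (f := fun k => pd k (fun z => u z k * h z)) (fun k _ => d1 k k) i
  have e4 : pd i (divg u) x = ∑ k, pd i (pd k (fun z => u z k)) x :=
    pd_sum Finset.univ (f := fun k => pd k (fun z => u z k)) (fun k _ => hd2 k k) i
  simp only [lame, lap, e3, e4, e2, Fin.sum_univ_three]
  ring

/-- Where `Lu = 0`, the field `L(hu)` involves only `u`, `Du` and derivatives of `h`: no second
derivatives of `u` remain. -/
lemma abs_lame_mul_le {Ω : Set E3} (hΩ : IsOpen Ω) {u : E3 → Fin 3 → ℝ}
    (hu : ContDiffOn ℝ (⊤ : ℕ∞) u Ω) {h : E3 → ℝ} (hh : ContDiff ℝ (⊤ : ℕ∞) h) (α : ℝ)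
    {x : E3} (hx : x ∈ Ω) (i : Fin 3) (hL : lame α u x i = 0) {A B : ℝ}
    (hA : ∀ j, |pd j h x| ≤ A) (hB : ∀ i j, |pd i (pd j h) x| ≤ B) :
    |lame α (fun z k => u z k * h z) x i| ≤
      3 * (1 + |α|) * (B * √(normSq u x) + 2 * (A * √(gradSq u x))) := by
  set R := √(normSq u x)
  set T := √(gradSq u x)
  have hR : ∀ k, |u x k| ≤ R := fun k => Real.abs_le_sqrt
    (Finset.single_le_sum (f := fun k => u x k ^ 2) (fun _ _ => sq_nonneg _) (Finset.mem_univ k))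
  have hT : ∀ j k, |pd j (fun z => u z k) x| ≤ T := fun j k => Real.abs_le_sqrt <|
    (Finset.single_le_sum (f := fun j => (pd j (fun z => u z k) x) ^ 2)
      (fun _ _ => sq_nonneg _) (Finset.mem_univ j)).trans
    (Finset.single_le_sum (f := fun k => ∑ j, (pd j (fun z => u z k) x) ^ 2)
      (fun _ _ => Finset.sum_nonneg fun _ _ => sq_nonneg _) (Finset.mem_univ k))
  have hA0 : 0 ≤ A := (abs_nonneg _).trans (hA 0)
  have hB0 : 0 ≤ B := (abs_nonneg _).trans (hB 0 0)
  have p1 : ∀ k i j, |u x k * pd i (pd j h) x| ≤ B * R := fun k i j => by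
    rw [abs_mul, mul_comm]; exact mul_le_mul (hB i j) (hR k) (abs_nonneg _) hB0
  have p2 : ∀ l j k, |pd l h x * pd j (fun z => u z k) x| ≤ A * T := fun l j k => by
    rw [abs_mul]; exact mul_le_mul (hA l) (hT j k) (abs_nonneg _) hA0
  have s1 : |∑ j, (u x i * pd j (pd j h) x + 2 * (pd j h x * pd j (fun z => u z i) x))| ≤
      3 * (B * R + 2 * (A * T)) := by
    refine (Finset.abs_sum_le_sum_abs _ _).trans ?_
    refine (Finset.sum_le_card_nsmul _ _ (B * R + 2 * (A * T)) fun j _ => ?_).trans (by simp [mul_add])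
    refine (abs_add_le _ _).trans ?_
    rw [abs_mul 2, abs_two]
    linarith [p1 i j j, p2 j j i]
  have s2 : |∑ k, (u x k * pd i (pd k h) x + pd k h x * pd i (fun z => u z k) x +
        pd k (fun z => u z k) x * pd i h x)| ≤ 3 * (B * R + 2 * (A * T)) := by
    refine (Finset.abs_sum_le_sum_abs _ _).trans ?_
    refine (Finset.sum_le_card_nsmul _ _ (B * R + 2 * (A * T)) fun k _ => ?_).trans (by simp [mul_add])
    refine (abs_add_three _ _ _).trans ?_
    rw [mul_comm (pd k (fun z => u z k) x)]
    linarith [p1 k i k, p2 k i k, p2 i k k]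
  rw [lame_mul hΩ hu hh α hx i, hL, mul_zero, zero_sub]
  refine (abs_sub _ _).trans ?_
  rw [abs_neg, abs_mul]
  have := mul_le_mul_of_nonneg_left s2 (abs_nonneg α)
  linarith

/-! ### The estimate -/

/-- Pointwise bound of the integrand away from `B_{4ρ/3}`. There `|x - y| ≥ ρ/3`, so `Φ(x - y)` is
`O(ρ⁻¹)`, while the derivatives of `η_ρ` are `O(ρ⁻¹)` and `O(ρ⁻²)`. -/
lemma abs_integrand_le {α : ℝ} {η : E3 → ℝ} {M : ℝ} (hM : 0 < M)
    (hη : ContDiff ℝ (⊤ : ℕ∞) η)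
    (hM0 : ∀ x, |η x| ≤ M) (hM1 : ∀ i x, |pd i η x| ≤ M) (hM2 : ∀ i j x, |pd i (pd j η) x| ≤ M)
    {Ω : Set E3} (hΩ : IsOpen Ω) {ρ : ℝ} (hρ : 0 < ρ) {u : E3 → Fin 3 → ℝ}
    (hu : ContDiffOn ℝ (⊤ : ℕ∞) u Ω) {x y : E3} (hx : x ∈ Ω) (hL : ∀ i, lame α u x i = 0)
    (hxρ : 4 / 3 * ρ ≤ ‖x‖) (hy : ‖y‖ < ρ) :
    |∑ i, ∑ j, lame α (fun z k => u z k * η (ρ⁻¹ • z)) x i *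
        Phi α (x - y) i j * (u x j * η (ρ⁻¹ • x))| ≤
      81 * (1 + |α|) * (|cA α| * (1 + |α / (α + 2)|)) * M ^ 2 * (ρ ^ 3)⁻¹ *
        (2 * normSq u x + ρ ^ 2 * gradSq u x) := by
  set K := |cA α| * (1 + |α / (α + 2)|) with hK
  have hK0 : 0 ≤ K := by positivity
  have hh : ContDiff ℝ (⊤ : ℕ∞) (fun z => η (ρ⁻¹ • z)) := hη.comp (contDiff_const_smul _)
  have hA : ∀ j, |pd j (fun z => η (ρ⁻¹ • z)) x| ≤ ρ⁻¹ * M := fun j => by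
    rw [pd_scale, abs_mul, abs_of_pos (inv_pos.2 hρ)]
    exact mul_le_mul_of_nonneg_left (hM1 j _) (inv_pos.2 hρ).le
  have hB : ∀ i j, |pd i (pd j (fun z => η (ρ⁻¹ • z))) x| ≤ ρ⁻¹ * (ρ⁻¹ * M) := fun i j => by
    have e : pd j (fun z => η (ρ⁻¹ • z)) = fun z => ρ⁻¹ * pd j η (ρ⁻¹ • z) := by
      ext z; exact pd_scale _ _ _ _
    have hd : DifferentiableAt ℝ (fun z => pd j η (ρ⁻¹ • z)) x :=
      ((contDiff_pd hη j).comp (contDiff_const_smul ρ⁻¹)).differentiable (by simp) x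
    rw [e, pd_const_mul hd, pd_scale, abs_mul, abs_mul, abs_of_pos (inv_pos.2 hρ)]
    have := inv_pos.2 hρ
    gcongr
    exact hM2 i j _
  set R := √(normSq u x) with hRdef
  set T := √(gradSq u x) with hTdef
  have hR0 : 0 ≤ R := Real.sqrt_nonneg _
  have hT0 : 0 ≤ T := Real.sqrt_nonneg _
  have hR2 : R ^ 2 = normSq u x := Real.sq_sqrt (normSq_nonneg u x)
  have hT2 : T ^ 2 = gradSq u x := Real.sq_sqrt (gradSq_nonneg u x)
  have hR : ∀ k, |u x k| ≤ R := fun k => Real.abs_le_sqrt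
    (Finset.single_le_sum (f := fun k => u x k ^ 2) (fun _ _ => sq_nonneg _) (Finset.mem_univ k))
  have hdist : ρ / 3 ≤ ‖x - y‖ := by
    have := norm_sub_norm_le x y
    linarith
  have hPhi : ∀ i j, |Phi α (x - y) i j| ≤ K * (3 * ρ⁻¹) := fun i j => by
    refine (abs_Phi_le α (x - y) i j).trans (mul_le_mul_of_nonneg_left ?_ hK0)
    have := inv_anti₀ (by positivity) hdist
    rwa [inv_div, div_eq_mul_inv] at this
  have hterm : ∀ i j, |lame α (fun z k => u z k * η (ρ⁻¹ • z)) x i *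
        Phi α (x - y) i j * (u x j * η (ρ⁻¹ • x))| ≤
      (3 * (1 + |α|) * (ρ⁻¹ * (ρ⁻¹ * M) * R + 2 * (ρ⁻¹ * M * T))) * (K * (3 * ρ⁻¹)) *
        (R * M) := by
    intro i j
    rw [abs_mul, abs_mul, abs_mul (u x j)]
    have h1 := abs_lame_mul_le hΩ hu hh α hx i (hL i) hA hB
    have := inv_pos.2 hρ
    gcongr
    · exact hPhi i j
    · exact hR j
    · exact hM0 _
  have hsum : |∑ i, ∑ j, lame α (fun z k => u z k * η (ρ⁻¹ • z)) x i *
        Phi α (x - y) i j * (u x j * η (ρ⁻¹ • x))| ≤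
      9 * ((3 * (1 + |α|) * (ρ⁻¹ * (ρ⁻¹ * M) * R + 2 * (ρ⁻¹ * M * T))) * (K * (3 * ρ⁻¹)) *
        (R * M)) := by
    refine (Finset.abs_sum_le_sum_abs _ _).trans ((Finset.sum_le_sum fun i _ =>
      (Finset.abs_sum_le_sum_abs _ _).trans (Finset.sum_le_sum fun j _ => hterm i j)).trans ?_)
    simp only [Finset.sum_const, Finset.card_univ, Fintype.card_fin, nsmul_eq_mul]
    push_cast
    linarith
  refine hsum.trans ?_
  have e : 9 * ((3 * (1 + |α|) * (ρ⁻¹ * (ρ⁻¹ * M) * R + 2 * (ρ⁻¹ * M * T))) * (K * (3 * ρ⁻¹)) *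
        (R * M)) = 81 * (1 + |α|) * K * M ^ 2 * (ρ ^ 3)⁻¹ * (R ^ 2 + 2 * R * (ρ * T)) := by
    field_simp
    ring
  rw [e, ← hR2, ← hT2]
  refine mul_le_mul_of_nonneg_left ?_ (by positivity)
  nlinarith [sq_nonneg (R - ρ * T)]

/-- Local estimate: if `Lu = 0` on `Ω ∩ B_{2ρ}`, then for `y ∈ B_ρ`,
`∫_Ω [L(uη_ρ)]·(Φ(·-y) u η_ρ) dx ≤ c m_ρ(u)`, with `c` depending only on `α` and `η`. -/
theorem lame_cutoff_energy_estimate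
    (α : ℝ) (hα : -1 < α)
    (η : E3 → ℝ) (hη : ContDiff ℝ (⊤ : ℕ∞) η) (hηc : HasCompactSupport η)
    (hηs : tsupport η ⊆ ball (0 : E3) (5 / 3))
    (hη1 : ∀ x ∈ ball (0 : E3) (4 / 3), η x = 1) :
    ∃ c > (0 : ℝ), ∀ Ω : Set E3, IsOpen Ω → ∀ ρ : ℝ, 0 < ρ →
      ∀ u : E3 → Fin 3 → ℝ, MemH10 Ω u →
      (∀ x ∈ Ω ∩ ball (0 : E3) (2 * ρ), ∀ i, lame α u x i = 0) →
      ∀ y ∈ ball (0 : E3) ρ,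
        (∫ x in Ω, ∑ i, ∑ j, lame α (fun z k => u z k * η (ρ⁻¹ • z)) x i *
            Phi α (x - y) i j * (u x j * η (ρ⁻¹ • x))) ≤ c * mRho Ω ρ u := by
  obtain ⟨M, hM, hM0, hM1, hM2⟩ := exists_pd_bounds hη hηc
  obtain ⟨ζ, m, hζ, hm, hζ1, hζm, hζS, hζone⟩ := exists_cutoff
  obtain ⟨C, hC, hcacc⟩ := caccioppoli hα
  set C₀ : ℝ := 81 * (1 + |α|) * (|cA α| * (1 + |α / (α + 2)|)) * M ^ 2 with hC₀
  have hC₀0 : 0 ≤ C₀ := by positivity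
  refine ⟨C₀ * (2 + C * m ^ 2) + 1, by positivity, ?_⟩
  intro Ω hΩ ρ hρ u hu hL y hy
  set S : Set E3 := {x : E3 | ρ < ‖x‖ ∧ ‖x‖ < 2 * ρ} with hS
  have hSm : MeasurableSet S :=
    (measurableSet_lt measurable_const measurable_norm).inter
      (measurableSet_lt measurable_norm measurable_const)
  have hρi : 0 < ρ⁻¹ := inv_pos.2 hρ
  have hnorm : ∀ x : E3, ‖ρ⁻¹ • x‖ = ‖x‖ / ρ := fun x => by
    rw [norm_smul, Real.norm_of_nonneg hρi.le, div_eq_inv_mul]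
  obtain ⟨hgi, hni, hle⟩ := hcacc Ω hΩ u hu S hSm (fun x => ζ (ρ⁻¹ • x))
    (hζ.comp (contDiff_const_smul _)) (ρ⁻¹ * m) (fun x => hζ1 _)
    (fun j x => by
      rw [pd_scale, abs_mul, abs_of_pos hρi]
      exact mul_le_mul_of_nonneg_left (hζm j _) hρi.le)
    (fun x hx => hζS _ fun h => hx (by
      rw [hnorm, lt_div_iff₀ hρ, div_lt_iff₀ hρ, one_mul] at h
      exact h))
    (fun x hx => hL x ⟨hx.1, by simpa using hx.2.2⟩)
  have hIm : ∫ x in Ω, S.indicator (normSq u) x = ∫ x in Ω ∩ S, ∑ i, (u x i) ^ 2 := by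
    rw [setIntegral_indicator hSm]; rfl
  have hI0 : 0 ≤ ∫ x in Ω, S.indicator (normSq u) x :=
    integral_nonneg fun x => Set.indicator_nonneg (fun z _ => normSq_nonneg u z) x
  -- For `|x| < 4ρ/3` the cutoff is locally `1` and `L(uη_ρ) = Lu = 0`; for `|x| ≥ 5ρ/3` the last
  -- factor `η_ρ` vanishes; only the region in between contributes.
  have hpt : ∀ x ∈ Ω, ‖∑ i, ∑ j, lame α (fun z k => u z k * η (ρ⁻¹ • z)) x i *
      Phi α (x - y) i j * (u x j * η (ρ⁻¹ • x))‖ ≤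
      C₀ * (ρ ^ 3)⁻¹ * (2 * S.indicator (normSq u) x +
        ρ ^ 2 * (ζ (ρ⁻¹ • x) ^ 2 * gradSq u x)) := by
    intro x hx
    have hrhs : 0 ≤ C₀ * (ρ ^ 3)⁻¹ * (2 * S.indicator (normSq u) x +
        ρ ^ 2 * (ζ (ρ⁻¹ • x) ^ 2 * gradSq u x)) := by
      have h1 : 0 ≤ S.indicator (normSq u) x :=
        Set.indicator_nonneg (fun z _ => normSq_nonneg u z) x
      have h2 := gradSq_nonneg u x
      positivity
    rcases lt_or_ge ‖x‖ (4 / 3 * ρ) with h1 | h1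
    · have hev : ∀ᶠ z in nhds x, (fun k => u z k * η (ρ⁻¹ • z)) = u z := by
        filter_upwards [(isOpen_lt continuous_norm continuous_const).mem_nhds h1] with z hz
        have : η (ρ⁻¹ • z) = 1 := hη1 _ (by
          rw [mem_ball_zero_iff, hnorm, div_lt_iff₀ hρ]; exact hz)
        ext k; simp [this]
      have hevi : ∀ k, (fun z => u z k * η (ρ⁻¹ • z)) =ᶠ[nhds x] fun z => u z k := fun k => by
        filter_upwards [hev] with z hz using congrFun hz k
      have hpdev : ∀ j k, pd j (fun z => u z k * η (ρ⁻¹ • z)) =ᶠ[nhds x]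
          pd j (fun z => u z k) := fun j k => by
        filter_upwards [(hevi k).eventuallyEq_nhds] with z hz using pd_congr hz j
      have hdev : divg (fun z k => u z k * η (ρ⁻¹ • z)) =ᶠ[nhds x] divg u := by
        filter_upwards [hpdev 0 0, hpdev 1 1, hpdev 2 2] with z h0 h1 h2
        simp only [divg, Fin.sum_univ_three, h0, h1, h2]
      have hl : ∀ i, lame α (fun z k => u z k * η (ρ⁻¹ • z)) x i = 0 := by
        intro i
        rw [← hL x ⟨hx, by rw [mem_ball_zero_iff]; linarith⟩ i]
        unfold lame lap
        rw [pd_congr hdev i]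
        congr 2
        exact Finset.sum_congr rfl fun j _ => pd_congr (hpdev j i) j
      simpa [hl] using hrhs
    · rcases lt_or_ge ‖x‖ (5 / 3 * ρ) with h2 | h2
      · have hxS : x ∈ S := ⟨by linarith, by linarith⟩
        have hz : ζ (ρ⁻¹ • x) = 1 := hζone _
          (by rw [hnorm, le_div_iff₀ hρ]; exact h1)
          (by rw [hnorm, div_le_iff₀ hρ]; exact h2.le)
        rw [Set.indicator_of_mem hxS, hz, one_pow, one_mul]
        exact abs_integrand_le hM hη hM0 hM1 hM2 hΩ hρ hu.1 hx
          (hL x ⟨hx, by rw [mem_ball_zero_iff]; exact hxS.2⟩) h1 (by simpa using hy)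
      · have hz : η (ρ⁻¹ • x) = 0 := by
          by_contra h
          have := hηs (subset_tsupport _ h)
          rw [mem_ball_zero_iff, hnorm, div_lt_iff₀ hρ] at this
          linarith
        simpa [hz] using hrhs
  have hbi : IntegrableOn (fun x => C₀ * (ρ ^ 3)⁻¹ * (2 * S.indicator (normSq u) x +
        ρ ^ 2 * (ζ (ρ⁻¹ • x) ^ 2 * gradSq u x))) Ω :=
    ((hni.const_mul 2).add (hgi.const_mul (ρ ^ 2))).const_mul _
  have hfin := norm_integral_le_of_norm_le hbi
    ((ae_restrict_mem hΩ.measurableSet).mono fun x hx => hpt x hx)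
  rw [integral_const_mul, integral_add (hni.const_mul 2) (hgi.const_mul (ρ ^ 2)),
    integral_const_mul, integral_const_mul] at hfin
  refine (le_abs_self _).trans (hfin.trans ?_)
  have hsq : ρ ^ 2 * (C * (ρ⁻¹ * m) ^ 2 * ∫ x in Ω, S.indicator (normSq u) x) =
      C * m ^ 2 * ∫ x in Ω, S.indicator (normSq u) x := by
    field_simp
  have hle2 := mul_le_mul_of_nonneg_left hle (sq_nonneg ρ)
  rw [hsq] at hle2
  have hmR : mRho Ω ρ u = (ρ ^ 3)⁻¹ * ∫ x in Ω, S.indicator (normSq u) x := by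
    rw [hIm]; rfl
  rw [hmR]
  set I := ∫ x in Ω, S.indicator (normSq u) x with hI
  have hρ3 : 0 ≤ (ρ ^ 3)⁻¹ := by positivity
  calc _ ≤ C₀ * (ρ ^ 3)⁻¹ * (2 * I + C * m ^ 2 * I) := by gcongr
    _ = C₀ * (2 + C * m ^ 2) * ((ρ ^ 3)⁻¹ * I) := by ring
    _ ≤ _ := by nlinarith [mul_nonneg hρ3 hI0]
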